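/- Under the hypotheses of the previous statement (ε^s y^{(n)} + … singularly perturbed, a_k(t,0) ≢ 0 for some 1 ≤ k ≤ n−1), there cannot exist n parameter-dependent solutions y_1(t,ε),…,y_n(t,ε), all holomorphic on the full polydisc U × W, that are linearly independent over ℂ for at least one value of ε ∈ W. -/

import Mathlib

open Set

/-- Taylor-coefficient form of the ODE. -/
def TRec (n s : ℕ) (α : ℕ → ℕ → ℂ) (ε : ℂ) (v : ℕ → ℂ) : Prop :=
  ∀ N, ε ^ s * v (n + N) + ∑ i ∈ Finset.range n, ∑ r ∈ Finset.range (N + 1),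
    (N.choose r : ℂ) * α i r * v (i + (N - r)) = 0

lemma TRec.comb {n s m : ℕ} {α : ℕ → ℕ → ℂ} {ε : ℂ} {v : Fin m → ℕ → ℂ}
    (h : ∀ j, TRec n s α ε (v j)) (c : Fin m → ℂ) :
    TRec n s α ε (fun l => ∑ j, c j * v j l) := by
  intro N
  have : ∑ j, c j * (ε ^ s * v j (n + N) + ∑ i ∈ Finset.range n, ∑ r ∈ Finset.range (N + 1),
    (N.choose r : ℂ) * α i r * v j (i + (N - r))) = 0 := by
    apply Finset.sum_eq_zero
    intro j _
    rw [h j N, mul_zero]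
  rw [← this]
  simp only [mul_add, Finset.sum_add_distrib, Finset.mul_sum]
  congr 1
  · apply Finset.sum_congr rfl; intros; ring
  · conv_rhs => rw [Finset.sum_comm]
    refine Finset.sum_congr rfl fun i _ => ?_
    conv_rhs => rw [Finset.sum_comm]
    refine Finset.sum_congr rfl fun r _ => Finset.sum_congr rfl fun j _ => ?_
    ring

lemma TRec.zero_of_ne {n s : ℕ} {α : ℕ → ℕ → ℂ} {ε : ℂ} (hε : ε ≠ 0) {v : ℕ → ℂ}
    (h : TRec n s α ε v) (h0 : ∀ l < n, v l = 0) : ∀ l, v l = 0 := by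
  intro l
  induction l using Nat.strong_induction_on with
  | _ l ih =>
    by_cases hl : l < n
    · exact h0 l hl
    · obtain ⟨N, rfl⟩ := Nat.exists_eq_add_of_le (not_lt.mp hl)
      have := h N
      rw [Finset.sum_eq_zero, add_zero] at this
      · exact (mul_eq_zero.mp this).resolve_left (pow_ne_zero _ hε)
      · intro i hi
        apply Finset.sum_eq_zero
        intro r hr
        rw [Finset.mem_range] at hi hr
        rw [ih _ (by omega), mul_zero]

lemma TRec.zero_of_eq {n s k : ℕ} (hs : 1 ≤ s) (hk : k < n) {α : ℕ → ℕ → ℂ} {v : ℕ → ℂ}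
    (hα0 : α k 0 ≠ 0) (hα : ∀ i, k < i → i < n → ∀ r, α i r = 0)
    (h : TRec n s α 0 v) (h0 : ∀ l < k, v l = 0) : ∀ l, v l = 0 := by
  intro l
  induction l using Nat.strong_induction_on with
  | _ l ih =>
    by_cases hl : l < k
    · exact h0 l hl
    · obtain ⟨N, rfl⟩ := Nat.exists_eq_add_of_le (not_lt.mp hl)
      have := h N
      rw [zero_pow (by omega), zero_mul, zero_add, Finset.sum_eq_single k,
        Finset.sum_eq_single 0] at this
      · simpa [hα0] using this
      · intro r hr hr0
        rw [Finset.mem_range] at hr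
        rw [ih _ (by omega), mul_zero]
      · intro h; simp at h
      · intro i hi hik
        apply Finset.sum_eq_zero
        intro r hr
        rw [Finset.mem_range] at hi hr
        rcases lt_or_gt_of_ne hik with h1 | h1
        · rw [ih _ (by omega), mul_zero]
        · rw [hα i h1 hi, mul_zero, zero_mul]
      · intro h; simp at h; omega

lemma dep_zero {n s k : ℕ} (hs : 1 ≤ s) (hk : k < n) {α : ℕ → ℕ → ℂ} {v : Fin n → ℕ → ℂ}
    (hα0 : α k 0 ≠ 0) (hα : ∀ i, k < i → i < n → ∀ r, α i r = 0)
    (h : ∀ j, TRec n s α 0 (v j)) :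
    ∃ c : Fin n → ℂ, c ≠ 0 ∧ ∀ l, ∑ j, c j * v j l = 0 := by
  let M : Matrix (Fin n) (Fin k) ℂ := fun j l => v j l
  have hker : LinearMap.ker M.vecMulLinear ≠ ⊥ :=
    LinearMap.ker_ne_bot_of_finrank_lt (by simpa using hk)
  obtain ⟨c, hc, hc0⟩ := (Submodule.ne_bot_iff _).mp hker
  refine ⟨c, hc0, TRec.zero_of_eq hs hk hα0 hα (TRec.comb h c) ?_⟩
  intro l hl
  have := congrFun (LinearMap.mem_ker.mp hc) ⟨l, hl⟩
  rw [Matrix.vecMulLinear_apply] at this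
  exact this

lemma dep_ne {n s : ℕ} {α : ℕ → ℕ → ℂ} {ε : ℂ} (hε : ε ≠ 0) {v : Fin n → ℕ → ℂ}
    (h : ∀ j, TRec n s α ε (v j))
    (hd : (Matrix.of fun j i : Fin n => v j i).det = 0) :
    ∃ c : Fin n → ℂ, c ≠ 0 ∧ ∀ l, ∑ j, c j * v j l = 0 := by
  obtain ⟨c, hc0, hc⟩ := Matrix.exists_vecMul_eq_zero_iff.mpr hd
  refine ⟨c, hc0, TRec.zero_of_ne hε (TRec.comb h c) ?_⟩
  intro l hl
  have := congrFun hc ⟨l, hl⟩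
  simpa [Matrix.vecMul, dotProduct] using this

lemma diff_det {n : ℕ} {W : Set ℂ} {v : Fin n → ℕ → ℂ → ℂ}
    (hv : ∀ j l, DifferentiableOn ℂ (v j l) W) :
    DifferentiableOn ℂ (fun ε => (Matrix.of fun j i : Fin n => v j i ε).det) W := by
  simp only [Matrix.det_apply, Matrix.of_apply]
  apply DifferentiableOn.fun_sum
  intro σ _
  apply DifferentiableOn.fun_const_smul
  apply DifferentiableOn.fun_finsetProd
  intro i _
  exact hv _ _

lemma det_factor {n s k : ℕ} (hs : 1 ≤ s) (hk : k < n) {W : Set ℂ} (hW : IsOpen W)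
    (h0W : (0 : ℂ) ∈ W) {α : ℕ → ℕ → ℂ → ℂ}
    (hαc : ∀ i < n, ∀ r, ContinuousOn (α i r) W)
    (hα0 : α k 0 0 ≠ 0) (hα : ∀ i, k < i → i < n → ∀ r, α i r 0 = 0) (m : ℕ) :
    ∀ v : Fin n → ℕ → ℂ → ℂ, (∀ j l, DifferentiableOn ℂ (v j l) W) →
      (∀ j, ∀ ε ∈ W, TRec n s (fun i r => α i r ε) ε (fun l => v j l ε)) →
      ∃ g : ℂ → ℂ, DifferentiableOn ℂ g W ∧
        ∀ ε ∈ W, (Matrix.of fun j i : Fin n => v j i ε).det = ε ^ m * g ε := by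
  induction m with
  | zero => exact fun v hv _ => ⟨_, diff_det hv, fun ε _ => by simp⟩
  | succ m ih =>
    intro v hv hrec
    obtain ⟨c, hc0, hc⟩ := dep_zero (v := fun j l => v j l 0) (α := fun i r => α i r 0)
      hs hk hα0 hα (fun j => hrec j 0 h0W)
    obtain ⟨p, hp⟩ := Function.ne_iff.mp hc0
    let u : ℕ → ℂ → ℂ := fun l ε => ∑ j, c j * v j l ε
    have hu : ∀ l, DifferentiableOn ℂ (u l) W := fun l =>
      DifferentiableOn.fun_sum fun j _ => (hv j l).const_mul _
    have hu0 : ∀ l, u l 0 = 0 := hc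
    let z : ℕ → ℂ → ℂ := fun l => dslope (u l) 0
    have hz : ∀ l, DifferentiableOn ℂ (z l) W := fun l =>
      (Complex.differentiableOn_dslope (hW.mem_nhds h0W)).mpr (hu l)
    have huz : ∀ l ε, u l ε = ε * z l ε := by
      intro l ε
      have := sub_smul_dslope (u l) 0 ε
      rw [hu0] at this
      simpa using this.symm
    have hzrec : ∀ ε ∈ W, TRec n s (fun i r => α i r ε) ε (fun l => z l ε) := by
      intro ε hε N
      let Φ : ℂ → ℂ := fun ε => ε ^ s * z (n + N) ε + ∑ i ∈ Finset.range n,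
        ∑ r ∈ Finset.range (N + 1), (N.choose r : ℂ) * α i r ε * z (i + (N - r)) ε
      have hne : ∀ ε ∈ W, ε ≠ 0 → Φ ε = 0 := by
        intro ε hε hε0
        have h1 : ε * Φ ε = 0 := by
          rw [← TRec.comb (fun j => hrec j ε hε) c N]
          change _ = ε ^ s * u (n + N) ε + ∑ i ∈ Finset.range n,
            ∑ r ∈ Finset.range (N + 1), (N.choose r : ℂ) * α i r ε * u (i + (N - r)) ε
          simp only [huz, Φ, mul_add, Finset.mul_sum]
          congr 1
          · ring
          · refine Finset.sum_congr rfl fun i _ => Finset.sum_congr rfl fun r _ => ?_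
            ring
        exact (mul_eq_zero.mp h1).resolve_left hε0
      change Φ ε = 0
      by_cases hε0 : ε = 0
      · subst hε0
        have hcont : ContinuousAt Φ 0 := by
          have : ContinuousOn Φ W := by
            apply ContinuousOn.add
            · exact ((continuous_id.pow s).continuousOn).mul (hz _).continuousOn
            · refine continuousOn_finsetSum _ fun i hi => continuousOn_finsetSum _ fun r _ => ?_
              exact (continuousOn_const.mul (hαc i (Finset.mem_range.mp hi) r)).mul
                (hz _).continuousOn
          exact this.continuousAt (hW.mem_nhds h0W)
        have h1 : Filter.Tendsto Φ (nhdsWithin 0 {0}ᶜ) (nhds (Φ 0)) :=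
          hcont.tendsto.mono_left nhdsWithin_le_nhds
        have h2 : Filter.Tendsto Φ (nhdsWithin 0 {0}ᶜ) (nhds 0) := by
          apply tendsto_const_nhds.congr'
          filter_upwards [self_mem_nhdsWithin, nhdsWithin_le_nhds (hW.mem_nhds h0W)] with x hx hx2
          exact (hne x hx2 hx).symm
        exact tendsto_nhds_unique h1 h2
      · exact hne ε hε hε0
    obtain ⟨g, hg, hdet⟩ := ih (Function.update v p z)
      (by
        intro j l
        by_cases hj : j = p
        · subst hj; simpa using hz l
        · simpa [hj] using hv j l)
      (by
        intro j ε hε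
        by_cases hj : j = p
        · subst hj; simpa using hzrec ε hε
        · simpa [hj] using hrec j ε hε)
    refine ⟨fun ε => (c p)⁻¹ * g ε, hg.const_mul _, fun ε hε => ?_⟩
    have h1 := Matrix.det_updateRow_sum (Matrix.of fun j i : Fin n => v j i ε) p c
    have h2 : (∑ j, c j • (Matrix.of fun j i : Fin n => v j i ε) j) =
        ε • (fun i : Fin n => z i ε) := by
      ext i
      simp only [Finset.sum_apply, Pi.smul_apply, Matrix.of_apply, smul_eq_mul]
      exact huz i ε
    rw [h2, Matrix.det_updateRow_smul] at h1
    have h3 : Matrix.updateRow (Matrix.of fun j i : Fin n => v j i ε) p (fun i : Fin n => z i ε)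
        = Matrix.of fun j i : Fin n => Function.update v p z j i ε := by
      ext j i
      by_cases hj : j = p
      · subst hj; simp
      · simp [hj]
    rw [h3, hdet ε hε, smul_eq_mul] at h1
    have hp' : c p ≠ 0 := hp
    field_simp
    rw [pow_succ']; linear_combination -h1

lemma det_zero {n s k : ℕ} (hs : 1 ≤ s) (hk : k < n) {W : Set ℂ} (hW : IsOpen W)
    (hWc : IsPreconnected W)
    (h0W : (0 : ℂ) ∈ W) {α : ℕ → ℕ → ℂ → ℂ}
    (hαc : ∀ i < n, ∀ r, ContinuousOn (α i r) W)
    (hα0 : α k 0 0 ≠ 0) (hα : ∀ i, k < i → i < n → ∀ r, α i r 0 = 0)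
    (v : Fin n → ℕ → ℂ → ℂ) (hv : ∀ j l, DifferentiableOn ℂ (v j l) W)
    (hrec : ∀ j, ∀ ε ∈ W, TRec n s (fun i r => α i r ε) ε (fun l => v j l ε)) :
    ∀ ε ∈ W, (Matrix.of fun j i : Fin n => v j i ε).det = 0 := by
  have hA := (diff_det hv).analyticOnNhd hW
  have htop : analyticOrderAt (fun ε => (Matrix.of fun j i : Fin n => v j i ε).det) 0 = ⊤ := by
    rw [ENat.eq_top_iff_forall_ge]
    intro m
    rw [natCast_le_analyticOrderAt (hA 0 h0W)]
    obtain ⟨g, hg, h⟩ := det_factor hs hk hW h0W hαc hα0 hα m v hv hrec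
    refine ⟨g, hg.analyticAt (hW.mem_nhds h0W), ?_⟩
    filter_upwards [hW.mem_nhds h0W] with ε hε
    simpa using h ε hε
  rw [analyticOrderAt_eq_top] at htop
  exact hA.eqOn_zero_of_preconnected_of_eventuallyEq_zero hWc h0W htop

lemma diff_param_integral {V : Set ℂ} (hV : IsOpen V) (F : ℂ → ℝ → ℂ) (a b : ℝ)
    (hc : ContinuousOn (fun q : ℂ × ℝ => F q.1 q.2) (V ×ˢ univ))
    (hd : ∀ θ, DifferentiableOn ℂ (fun ε => F ε θ) V) :
    DifferentiableOn ℂ (fun ε => ∫ θ in a..b, F ε θ) V := by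
  intro x hx
  have hcθ : ∀ ε ∈ V, Continuous (F ε) := by
    intro ε hε
    exact hc.comp_continuous (f := fun θ : ℝ => (ε, θ)) (by fun_prop) (fun θ => ⟨hε, mem_univ _⟩)
  obtain ⟨R, hR, hRV⟩ := Metric.nhds_basis_closedBall.mem_iff.mp (hV.mem_nhds hx)
  obtain ⟨M, hM⟩ := ((isCompact_closedBall x R).prod (isCompact_uIcc (a := a) (b := b))).exists_bound_of_continuousOn
    (hc.mono (prod_mono hRV (subset_univ _)))
  have hR2 : 0 < R / 2 := by positivity
  refine (intervalIntegral.hasDerivAt_integral_of_dominated_loc_of_deriv_le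
    (F' := fun ε θ => deriv (fun ε => F ε θ) ε) (bound := fun _ => M / (R / 2))
    (Metric.ball_mem_nhds x hR2) ?_ ?_ ?_ ?_ ?_ ?_).2.differentiableAt.differentiableWithinAt
  · filter_upwards [hV.mem_nhds hx] with ε hε
    exact (hcθ ε hε).aestronglyMeasurable
  · exact (hcθ x hx).intervalIntegrable _ _
  · obtain ⟨w, hw⟩ := Filter.exists_seq_tendsto (nhdsWithin x {x}ᶜ)
    have hw2 : ∀ᶠ i in Filter.atTop, w i ∈ V :=
      hw.eventually (nhdsWithin_le_nhds (hV.mem_nhds hx))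
    obtain ⟨i0, hi0⟩ := Filter.eventually_atTop.mp hw2
    refine aestronglyMeasurable_of_tendsto_ae Filter.atTop
      (f := fun i θ => slope (fun ε => F ε θ) x (w (i + i0))) ?_ ?_
    · intro i
      apply Continuous.aestronglyMeasurable
      simp only [slope, vsub_eq_sub]
      exact ((hcθ _ (hi0 (i + i0) (by omega))).sub (hcθ x hx)).const_smul ((w (i + i0) - x)⁻¹)
    · refine Filter.Eventually.of_forall fun θ => ?_
      have := ((hd θ).differentiableAt (hV.mem_nhds hx)).hasDerivAt
      rw [hasDerivAt_iff_tendsto_slope] at this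
      exact this.comp (hw.comp (Filter.tendsto_add_atTop_nat i0))
  · refine Filter.Eventually.of_forall fun θ hθ ε hε => ?_
    have hsub : Metric.closedBall ε (R / 2) ⊆ Metric.closedBall x R := by
      apply Metric.closedBall_subset_closedBall'
      have := Metric.mem_ball.mp hε
      linarith
    apply Complex.norm_deriv_le_of_forall_mem_sphere_norm_le hR2
    · exact ((hd θ).mono (Metric.closure_ball_subset_closedBall.trans
        (hsub.trans hRV))).diffContOnCl
    · intro z hz
      exact hM (z, θ) ⟨hsub (Metric.sphere_subset_closedBall hz), uIoc_subset_uIcc hθ⟩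
  · exact intervalIntegrable_const
  · refine Filter.Eventually.of_forall fun θ hθ ε hε => ?_
    refine ((hd θ).differentiableAt (hV.mem_nhds (hRV ?_))).hasDerivAt
    have := Metric.mem_ball.mp hε
    rw [Metric.mem_closedBall]; linarith

lemma diff_iter {U W : Set ℂ} (hU : IsOpen U) (hW : IsOpen W) (f : ℂ → ℂ → ℂ)
    (hf : DifferentiableOn ℂ (fun q : ℂ × ℂ => f q.1 q.2) (U ×ˢ W)) {t : ℂ} (ht : t ∈ U) (l : ℕ) :
    DifferentiableOn ℂ (fun ε => iteratedDeriv l (fun τ => f τ ε) t) W := by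
  obtain ⟨R, hR, hRU⟩ := Metric.nhds_basis_closedBall.mem_iff.mp (hU.mem_nhds ht)
  have key : ∀ ε ∈ W, iteratedDeriv l (fun τ => f τ ε) t =
      (2 * Real.pi * Complex.I / l.factorial)⁻¹ *
      ∮ z in C(t, R), (1 / (z - t) ^ (l + 1)) • f z ε := by
    intro ε hε
    have hd : DifferentiableOn ℂ (fun τ => f τ ε) (Metric.closedBall t R) :=
      hf.comp (f := fun τ : ℂ => (τ, ε)) (by fun_prop) (fun τ hτ => ⟨hRU hτ, hε⟩)
    rw [hd.circleIntegral_one_div_sub_center_pow_smul hR l, smul_eq_mul, ← mul_assoc,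
      inv_mul_cancel₀, one_mul]
    have : (l.factorial : ℂ) ≠ 0 := by exact_mod_cast l.factorial_ne_zero
    simp [this, Real.pi_ne_zero]
  refine DifferentiableOn.congr ?_ key
  apply DifferentiableOn.const_mul
  unfold circleIntegral
  have hmem : ∀ θ, circleMap t R θ ∈ U := fun θ =>
    hRU (Metric.sphere_subset_closedBall (circleMap_mem_sphere t hR.le θ))
  apply diff_param_integral hW
  · have h1 : ContinuousOn (fun q : ℂ × ℝ => f (circleMap t R q.2) q.1) (W ×ˢ univ) :=
      hf.continuousOn.comp (f := fun q : ℂ × ℝ => (circleMap t R q.2, q.1))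
        (by fun_prop) (fun q hq => ⟨hmem _, hq.1⟩)
    have h2 : Continuous fun q : ℂ × ℝ => deriv (circleMap t R) q.2 := by
      simp only [deriv_circleMap]; fun_prop
    have h3 : Continuous fun q : ℂ × ℝ => 1 / (circleMap t R q.2 - t) ^ (l + 1) := by
      apply Continuous.div continuous_const (by fun_prop)
      intro q
      apply pow_ne_zero
      rw [sub_ne_zero]
      exact circleMap_ne_center hR.ne'
    exact h2.continuousOn.smul (h3.continuousOn.smul h1)
  · intro θ
    have h1 : DifferentiableOn ℂ (fun ε : ℂ => f (circleMap t R θ) ε) W :=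
      hf.comp (f := fun ε : ℂ => (circleMap t R θ, ε)) (by fun_prop) (fun ε hε => ⟨hmem _, hε⟩)
    exact (h1.fun_const_smul _).fun_const_smul _

lemma ode_rec {n s : ℕ} {U : Set ℂ} (hU : IsOpen U) {t ε : ℂ} (ht : t ∈ U)
    (A : ℕ → ℂ → ℂ) (hA : ∀ i < n, DifferentiableOn ℂ (A i) U)
    (Y : ℂ → ℂ) (hY : DifferentiableOn ℂ Y U)
    (h : ∀ τ ∈ U, ε ^ s * iteratedDeriv n Y τ +
      ∑ i ∈ Finset.range n, A i τ * iteratedDeriv i Y τ = 0) :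
    TRec n s (fun i r => iteratedDeriv r (A i) t) ε (fun l => iteratedDeriv l Y t) := by
  intro N
  have hYa : AnalyticAt ℂ Y t := hY.analyticAt (hU.mem_nhds ht)
  have hYi : ∀ l, AnalyticAt ℂ (iteratedDeriv l Y) t := by
    intro l; rw [iteratedDeriv_eq_iterate]; exact hYa.iterated_deriv l
  have hAa : ∀ i < n, AnalyticAt ℂ (A i) t := fun i hi => (hA i hi).analyticAt (hU.mem_nhds ht)
  have hii : ∀ i m, iteratedDeriv m (iteratedDeriv i Y) t = iteratedDeriv (i + m) Y t := by
    intro i m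
    simp only [iteratedDeriv_eq_iterate, ← Function.iterate_add_apply, add_comm i m]
  have h0 : iteratedDeriv N (fun τ => ε ^ s * iteratedDeriv n Y τ +
      ∑ i ∈ Finset.range n, A i τ * iteratedDeriv i Y τ) t = 0 := by
    have : (fun τ => ε ^ s * iteratedDeriv n Y τ +
      ∑ i ∈ Finset.range n, A i τ * iteratedDeriv i Y τ) =ᶠ[nhds t] fun _ => 0 := by
      filter_upwards [hU.mem_nhds ht] with τ hτ using h τ hτ
    rw [this.iteratedDeriv_eq]
    simp
  rw [iteratedDeriv_fun_add, iteratedDeriv_const_mul_field, iteratedDeriv_fun_sum, hii] at h0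
  · rw [← h0]
    congr 1
    refine Finset.sum_congr rfl fun i hi => ?_
    rw [iteratedDeriv_fun_mul (hAa i (Finset.mem_range.mp hi)).contDiffAt (hYi i).contDiffAt]
    refine Finset.sum_congr rfl fun r _ => ?_
    rw [hii]
  · intro i hi
    exact ((hAa i (Finset.mem_range.mp hi)).mul (hYi i)).contDiffAt
  · exact (analyticAt_const.mul (hYi n)).contDiffAt
  · apply AnalyticAt.contDiffAt
    apply Finset.analyticAt_fun_sum
    intro i hi
    exact (hAa i (Finset.mem_range.mp hi)).mul (hYi i)

lemma zero_of_iter {U : Set ℂ} (hU : IsOpen U) (hUc : IsPreconnected U) {t : ℂ} (ht : t ∈ U)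
    {Y : ℂ → ℂ} (hY : DifferentiableOn ℂ Y U) (h : ∀ l, iteratedDeriv l Y t = 0) :
    ∀ τ ∈ U, Y τ = 0 := by
  have hA := hY.analyticOnNhd hU
  have htop : analyticOrderAt Y t = ⊤ := by
    rw [ENat.eq_top_iff_forall_ge]
    intro m
    rw [natCast_le_analyticOrderAt_iff_iteratedDeriv_eq_zero (hA t ht)]
    exact fun i _ => h i
  rw [analyticOrderAt_eq_top] at htop
  exact hA.eqOn_zero_of_preconnected_of_eventuallyEq_zero hUc ht htop

theorem stmt14 (n s k : ℕ) (hs : 1 ≤ s) (hk1 : 1 ≤ k) (hkn : k ≤ n - 1)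
    (U W : Set ℂ) (hU : IsOpen U) (hUc : IsPreconnected U)
    (hW : IsOpen W) (hWc : IsPreconnected W) (h0W : (0 : ℂ) ∈ W)
    (a : ℕ → ℂ → ℂ → ℂ)
    (ha : ∀ i < n, DifferentiableOn ℂ (fun q : ℂ × ℂ => a i q.1 q.2) (U ×ˢ W))
    (hak : ∃ t ∈ U, a k t 0 ≠ 0) :
    ¬ ∃ y : Fin n → ℂ → ℂ → ℂ,
      (∀ j, DifferentiableOn ℂ (fun q : ℂ × ℂ => y j q.1 q.2) (U ×ˢ W)) ∧
      (∀ j, ∀ ε ∈ W, ∀ t ∈ U,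
        ε ^ s * iteratedDeriv n (fun τ => y j τ ε) t +
          ∑ i ∈ Finset.range n, a i t ε * iteratedDeriv i (fun τ => y j τ ε) t = 0) ∧
      (∃ ε ∈ W, LinearIndependent ℂ (fun j : Fin n => fun t : U => y j (t : ℂ) ε)) := by
  classical
  rintro ⟨y, hy, hode, ε, hε, hli⟩
  -- the largest index whose coefficient does not vanish identically at `ε = 0`
  obtain ⟨K, hKn, ⟨t, ht, hKt⟩, hmax⟩ : ∃ K < n, (∃ t ∈ U, a K t 0 ≠ 0) ∧
      ∀ i, K < i → i < n → ∀ t ∈ U, a i t 0 = 0 := by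
    let P : ℕ → Prop := fun i => i < n ∧ ∃ t ∈ U, a i t 0 ≠ 0
    have hPk : P k := ⟨by omega, hak⟩
    have hsp : P (Nat.findGreatest P n) := Nat.findGreatest_spec (m := k) (by omega) hPk
    refine ⟨Nat.findGreatest P n, hsp.1, hsp.2, fun i hi hin τ hτ => ?_⟩
    by_contra hne
    exact Nat.findGreatest_is_greatest hi hin.le ⟨hin, τ, hτ, hne⟩
  have hslice : ∀ f : ℂ → ℂ → ℂ, DifferentiableOn ℂ (fun q : ℂ × ℂ => f q.1 q.2) (U ×ˢ W) →
      ∀ e ∈ W, DifferentiableOn ℂ (fun τ => f τ e) U := fun f hf e he =>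
    hf.comp (f := fun τ : ℂ => (τ, e)) (by fun_prop) (fun τ hτ => ⟨hτ, he⟩)
  let v : Fin n → ℕ → ℂ → ℂ := fun j l e => iteratedDeriv l (fun τ => y j τ e) t
  let α : ℕ → ℕ → ℂ → ℂ := fun i r e => iteratedDeriv r (fun τ => a i τ e) t
  have hv : ∀ j l, DifferentiableOn ℂ (v j l) W := fun j l => diff_iter hU hW (y j) (hy j) ht l
  have hαc : ∀ i < n, ∀ r, ContinuousOn (α i r) W := fun i hi r =>
    (diff_iter hU hW (a i) (ha i hi) ht r).continuousOn
  have hrec : ∀ j, ∀ e ∈ W, TRec n s (fun i r => α i r e) e (fun l => v j l e) := fun j e he =>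
    ode_rec hU ht (fun i τ => a i τ e) (fun i hi => hslice (a i) (ha i hi) e he)
      (fun τ => y j τ e) (hslice (y j) (hy j) e he) (hode j e he)
  have hα0 : α K 0 0 ≠ 0 := by simpa [α] using hKt
  have hα : ∀ i, K < i → i < n → ∀ r, α i r 0 = 0 := by
    intro i hi hin r
    have : (fun τ => a i τ 0) =ᶠ[nhds t] fun _ => 0 := by
      filter_upwards [hU.mem_nhds ht] with τ hτ using hmax i hi hin τ hτ
    simp only [α]
    rw [this.iteratedDeriv_eq]
    simp
  obtain ⟨c, hc0, hc⟩ : ∃ c : Fin n → ℂ, c ≠ 0 ∧ ∀ l, ∑ j, c j * v j l ε = 0 := by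
    by_cases hε0 : ε = 0
    · subst hε0
      exact dep_zero (v := fun j l => v j l 0) (α := fun i r => α i r 0) hs hKn hα0 hα
        (fun j => hrec j 0 hε)
    · exact dep_ne (v := fun j l => v j l ε) hε0 (fun j => hrec j ε hε)
        (det_zero hs hKn hW hWc h0W hαc hα0 hα v hv hrec ε hε)
  apply hc0
  have hz : ∀ τ ∈ U, ∑ j, c j * y j τ ε = 0 := by
    have hd : ∀ j, DifferentiableOn ℂ (fun τ => c j * y j τ ε) U := fun j =>
      (hslice (y j) (hy j) ε hε).const_mul _
    apply zero_of_iter hU hUc ht (Y := fun τ => ∑ j, c j * y j τ ε)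
      (DifferentiableOn.fun_sum fun j _ => hd j)
    intro l
    rw [iteratedDeriv_fun_sum]
    · simp only [iteratedDeriv_const_mul_field]
      exact hc l
    · exact fun j _ => ((hd j).analyticAt (hU.mem_nhds ht)).contDiffAt
  funext j
  refine Fintype.linearIndependent_iff.mp hli c ?_ j
  ext τ
  simpa using hz τ τ.2
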